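/- arXiv:1511.05906 — 4 statements merged into one kernel-verified Lean document; each statement's English description precedes it below -/
import Mathlib

section
/- (Distortion Lemma) Let T satisfy (A1)–(A4) and let the refined Markov partition P_o and its cylinders be as defined. There exists D > 1 such that for every n ∈ ℕ, every index string j^{n+1} = (j_0, ..., j_n) ∈ (ℤ⁻ ∪ {1,2,...})^{n+1} with Leb(I_{j^{n+1}}) > 0 and at least one component j_k > 0, and every Borel set B ⊆ I_{j^{n+1}}, one has: (i) T^n B ⊆ I_{j_n}; (ii) Leb(T^n B)/Leb(I_{j_n}) ≤ D · Leb(B)/Leb(I_{j^{n+1}}); (iii) Leb(T^{n+1} B) ≤ D · Leb(B)/Leb(I_{j^{n+1}}). -/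
open MeasureTheory Set Filter

/-- An interval map `T : [0,1] → [0,1]` which is Markov with respect to the
partition `{[a_j, a_{j+1}]}` given by the strictly increasing sequence
`0 = a_0 < a_1 < ⋯` with supremum `1`, satisfying hypotheses (A1)–(A4).
The branch extensions are `φ j`, with first and second derivatives
`φd j` and `φdd j` (taken within `[a_j, a_{j+1}]`). -/
structure IntervalMapSetup where
  T : ℝ → ℝ
  a : ℕ → ℝ
  φ : ℕ → ℝ → ℝ
  φd : ℕ → ℝ → ℝ
  φdd : ℕ → ℝ → ℝ
  Λ : ℝ
  K : ℝ
  β : ℝ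
  c₁ : ℝ
  c₂ : ℝ
  ha0 : a 0 = 0
  ha_mono : StrictMono a
  ha_lt : ∀ j, a j < 1
  ha_lim : Tendsto a atTop (nhds 1)
  hT_maps : MapsTo T (Icc 0 1) (Icc 0 1)
  -- `T` coincides with the branch `φ j` on the open interval `(a_j, a_{j+1})`
  hT_eq : ∀ j, ∀ x ∈ Ioo (a j) (a (j+1)), T x = φ j x
  -- (A1): each branch is a bijection onto `[0,1]`, `C²` up to the boundary
  hφ_bij : ∀ j, BijOn (φ j) (Icc (a j) (a (j+1))) (Icc 0 1)
  hφ_d : ∀ j, ∀ x ∈ Icc (a j) (a (j+1)),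
    HasDerivWithinAt (φ j) (φd j x) (Icc (a j) (a (j+1))) x
  hφ_dd : ∀ j, ∀ x ∈ Icc (a j) (a (j+1)),
    HasDerivWithinAt (φd j) (φdd j x) (Icc (a j) (a (j+1))) x
  hφdd_cont : ∀ j, ContinuousOn (φdd j) (Icc (a j) (a (j+1)))
  -- (A2): uniform expansion on branches `j ≥ 1`
  hΛ : 1 < Λ
  hA2 : ∀ j, 1 ≤ j → ∀ x ∈ Icc (a j) (a (j+1)), Λ ≤ |φd j x|
  -- (A3): distortion bound
  hK : 0 < K
  hA3 : ∀ j, ∀ x ∈ Icc (a j) (a (j+1)), |φdd j x| / (φd j x) ^ 2 ≤ K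
  -- (A4): indifferent fixed point at 0
  hβ : 0 ≤ β
  hc₁ : 0 < c₁
  hc₁₂ : c₁ < c₂
  hA4_conv : ConvexOn ℝ (Icc (a 0) (a 1)) (φ 0)
  hA4_fix : φ 0 0 = 0
  hA4_d1 : φd 0 0 = 1
  hA4_exp : ∀ x : ℝ, 0 < x → x ≤ a 1 → 1 < φd 0 x
  hA4_dd : ∀ x ∈ Ioo (0:ℝ) (a 1), c₁ * x ^ β ≤ φdd 0 x ∧ φdd 0 x ≤ c₂ * x ^ β

/-- The element of the refined Markov partition `P_o` with index `j ∈ ℤ⁻ ∪ {1,2,…}`: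
for `j ≥ 1` it is `I_j = [a_j, a_{j+1}]`, and for `j = -k < 0` it is
`I_{-k} = [b_k, b_{k-1}]`, where `(b_k)` is the backward orbit of `a_1` in `I_0`. -/
def refIo (S : IntervalMapSetup) (b : ℕ → ℝ) (j : ℤ) : Set ℝ :=
  if 1 ≤ j then Set.Icc (S.a j.toNat) (S.a (j.toNat + 1))
  else Set.Icc (b (-j).toNat) (b ((-j).toNat - 1))

/-- The cylinder `I_{(j_0, …, j_{n-1})} = I_{j_0} ∩ T⁻¹ I_{j_1} ∩ ⋯ ∩ T^{-(n-1)} I_{j_{n-1}}`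
of the refined partition. -/
def cylSet (S : IntervalMapSetup) (b : ℕ → ℝ) (n : ℕ) (js : ℕ → ℤ) : Set ℝ :=
  ⋂ k ∈ Finset.range n, S.T^[k] ⁻¹' refIo S b (js k)

namespace DL
variable (S : IntervalMapSetup)

lemma a1_pos : 0 < S.a 1 := by
  have := S.ha_mono (show 0 < 1 by norm_num); rwa [S.ha0] at this

lemma one_le_abs (j : ℕ) {x : ℝ} (hx : x ∈ Icc (S.a j) (S.a (j+1))) : 1 ≤ |S.φd j x| := by
  rcases Nat.eq_zero_or_pos j with rfl | hj
  · rw [S.ha0] at hx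
    rcases hx.1.eq_or_lt with h | h
    · rw [← h, S.hA4_d1]; simp
    · exact (S.hA4_exp x h hx.2).le.trans (le_abs_self _)
  · exact S.hΛ.le.trans (S.hA2 j hj x hx)

lemma ne0 (j : ℕ) {x : ℝ} (hx : x ∈ Icc (S.a j) (S.a (j+1))) : S.φd j x ≠ 0 := by
  have := one_le_abs S j hx
  intro h; rw [h] at this; norm_num at this

/-- orientation sign of a branch -/
lemma sign (j : ℕ) : ∃ σ : ℝ, |σ| = 1 ∧ ∀ x ∈ Icc (S.a j) (S.a (j+1)), σ * S.φd j x = |S.φd j x| := by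
  rcases hasDerivWithinAt_forall_lt_or_forall_gt_of_forall_ne (convex_Icc (S.a j) (S.a (j+1)))
    (S.hφ_d j) (m := 0) (fun x hx => ne0 S j hx) with h | h
  · exact ⟨-1, by simp, fun x hx => by rw [abs_of_neg (h x hx)]; ring⟩
  · exact ⟨1, by simp, fun x hx => by rw [abs_of_pos (h x hx)]; ring⟩

lemma mono_of (s t : ℝ) (f f' : ℝ → ℝ)
    (hf : ∀ x ∈ Icc s t, HasDerivWithinAt f (f' x) (Icc s t) x)
    (h0 : ∀ x ∈ Icc s t, 0 ≤ f' x) : MonotoneOn f (Icc s t) := by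
  refine monotoneOn_of_hasDerivWithinAt_nonneg (f' := f') (convex_Icc s t) (fun x hx => (hf x hx).continuousWithinAt) ?_ ?_
  · intro x hx
    exact (hf x (interior_subset hx)).mono interior_subset
  · intro x hx; exact h0 x (interior_subset hx)

lemma abs_mul_sub {σ : ℝ} (h : |σ| = 1) (p q : ℝ) : |p - q| = |σ * p - σ * q| := by
  rw [← mul_sub, abs_mul, h, one_mul]

lemma mono_sigma (j : ℕ) {σ : ℝ}
    (hσ : ∀ x ∈ Icc (S.a j) (S.a (j+1)), σ * S.φd j x = |S.φd j x|) :
    MonotoneOn (fun x => σ * S.φ j x) (Icc (S.a j) (S.a (j+1))) := by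
  refine mono_of _ _ _ (fun x => σ * S.φd j x) (fun x hx => (S.hφ_d j x hx).const_mul σ) ?_
  intro x hx; rw [hσ x hx]; positivity

lemma deriv_dist_aux (j : ℕ) {x y : ℝ} (hx : x ∈ Icc (S.a j) (S.a (j+1)))
    (hy : y ∈ Icc (S.a j) (S.a (j+1))) :
    |S.φd j x| ≤ Real.exp (S.K * |S.φ j x - S.φ j y|) * |S.φd j y| := by
  obtain ⟨σ, h1, hσ⟩ := sign S j
  have hm := mono_sigma S j hσ
  have hb : ∀ z ∈ Icc (S.a j) (S.a (j+1)), |S.φdd j z / S.φd j z| ≤ S.K * |S.φd j z| := by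
    intro z hz
    have h3 := S.hA3 j z hz
    have hp : 0 < |S.φd j z| := abs_pos.2 (ne0 S j hz)
    rw [← sq_abs, div_le_iff₀ (by positivity)] at h3
    rw [abs_div, div_le_iff₀ hp]; nlinarith
  have m1 : MonotoneOn (fun z => S.K * (σ * S.φ j z) - Real.log (S.φd j z)) (Icc (S.a j) (S.a (j+1))) := by
    refine mono_of _ _ _ (fun z => S.K * (σ * S.φd j z) - S.φdd j z / S.φd j z)
      (fun z hz => (((S.hφ_d j z hz).const_mul σ).const_mul S.K).sub
        ((S.hφ_dd j z hz).log (ne0 S j hz))) ?_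
    intro z hz; have := (abs_le.1 (hb z hz)).2; rw [hσ z hz]; linarith
  have m2 : MonotoneOn (fun z => S.K * (σ * S.φ j z) + Real.log (S.φd j z)) (Icc (S.a j) (S.a (j+1))) := by
    refine mono_of _ _ _ (fun z => S.K * (σ * S.φd j z) + S.φdd j z / S.φd j z)
      (fun z hz => (((S.hφ_d j z hz).const_mul σ).const_mul S.K).add
        ((S.hφ_dd j z hz).log (ne0 S j hz))) ?_
    intro z hz; have := (abs_le.1 (hb z hz)).1; rw [hσ z hz]; linarith
  have hK := S.hK
  have key : Real.log (S.φd j x) ≤ S.K * |S.φ j x - S.φ j y| + Real.log (S.φd j y) := by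
    rw [abs_mul_sub h1]
    rcases le_total x y with h | h
    · have e := m2 hx hy h
      have e2 := neg_abs_le (σ * S.φ j x - σ * S.φ j y)
      simp only at e; nlinarith
    · have e := m1 hy hx h
      have e2 := le_abs_self (σ * S.φ j x - σ * S.φ j y)
      simp only at e; nlinarith
  have := Real.exp_le_exp.2 key
  rwa [Real.exp_add, Real.exp_log_eq_abs (ne0 S j hx), Real.exp_log_eq_abs (ne0 S j hy)] at this

lemma mvt (j : ℕ) {x y : ℝ} (hx : x ∈ Icc (S.a j) (S.a (j+1)))
    (hy : y ∈ Icc (S.a j) (S.a (j+1))) :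
    ∃ z ∈ Icc (S.a j) (S.a (j+1)), |S.φ j x - S.φ j y| = |S.φd j z| * |x - y| ∧
      |S.φ j z - S.φ j x| ≤ |S.φ j x - S.φ j y| ∧ |S.φ j z - S.φ j y| ≤ |S.φ j x - S.φ j y| := by
  wlog hxy : x < y generalizing x y
  · rcases (not_lt.1 hxy).eq_or_lt with h | h
    · subst h; exact ⟨y, hx, by simp⟩
    · obtain ⟨z, hz, e1, e2, e3⟩ := this hy hx h
      exact ⟨z, hz, by rw [abs_sub_comm, e1, abs_sub_comm], by rwa [abs_sub_comm (S.φ j x)],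
        by rwa [abs_sub_comm (S.φ j x)]⟩
  have hsub : Icc x y ⊆ Icc (S.a j) (S.a (j+1)) := Icc_subset_Icc hx.1 hy.2
  obtain ⟨z, hz, e⟩ := exists_hasDerivAt_eq_slope (S.φ j) (S.φd j) hxy
    (fun t ht => (S.hφ_d j t (hsub ht)).continuousWithinAt.mono hsub)
    (fun t ht => (S.hφ_d j t (hsub (Ioo_subset_Icc_self ht))).hasDerivAt
      (Icc_mem_nhds (hx.1.trans_lt ht.1) (ht.2.trans_le hy.2)))
  have hz' := hsub (Ioo_subset_Icc_self hz)
  obtain ⟨σ, h1, hσ⟩ := sign S j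
  have hm := mono_sigma S j hσ
  have ha := hm hx hz' hz.1.le
  have hb := hm hz' hy hz.2.le
  simp only at ha hb
  refine ⟨z, hz', ?_, ?_, ?_⟩
  · have hne : y - x ≠ 0 := (sub_pos.2 hxy).ne'
    rw [e, ← abs_mul, abs_sub_comm, ← abs_neg]
    congr 1; field_simp; ring
  · rw [abs_mul_sub h1 (S.φ j z), abs_mul_sub h1 (S.φ j x) (S.φ j y), abs_of_nonneg (by linarith), abs_of_nonpos (by linarith)]; linarith
  · rw [abs_mul_sub h1 (S.φ j z), abs_mul_sub h1 (S.φ j x) (S.φ j y), abs_of_nonpos (by linarith), abs_of_nonpos (by linarith)]; linarith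

lemma branch_dist (j : ℕ) {x y u v : ℝ} (hx : x ∈ Icc (S.a j) (S.a (j+1)))
    (hy : y ∈ Icc (S.a j) (S.a (j+1))) (hu : u ∈ Icc (S.a j) (S.a (j+1)))
    (hv : v ∈ Icc (S.a j) (S.a (j+1))) :
    |S.φ j x - S.φ j y| * |u - v| ≤
      Real.exp (S.K * (|S.φ j x - S.φ j y| + |S.φ j y - S.φ j u| + |S.φ j u - S.φ j v|)) *
        (|S.φ j u - S.φ j v| * |x - y|) := by
  obtain ⟨z, hz, e1, -, e3⟩ := mvt S j hx hy
  obtain ⟨w, hw, f1, f2, -⟩ := mvt S j hu hv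
  have hd := deriv_dist_aux S j hz hw
  have htri : |S.φ j z - S.φ j w| ≤ |S.φ j x - S.φ j y| + |S.φ j y - S.φ j u| + |S.φ j u - S.φ j v| := by
    have := abs_sub_le (S.φ j z) (S.φ j y) (S.φ j w)
    have := abs_sub_le (S.φ j y) (S.φ j u) (S.φ j w)
    rw [abs_sub_comm] at f2
    linarith
  have hE : Real.exp (S.K * |S.φ j z - S.φ j w|) ≤ Real.exp (S.K * (|S.φ j x - S.φ j y| + |S.φ j y - S.φ j u| + |S.φ j u - S.φ j v|)) :=
    Real.exp_le_exp.2 (mul_le_mul_of_nonneg_left htri S.hK.le)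
  set R := Real.exp (S.K * (|S.φ j x - S.φ j y| + |S.φ j y - S.φ j u| + |S.φ j u - S.φ j v|))
  rw [e1, f1]
  have : |S.φd j z| ≤ R * |S.φd j w| := hd.trans (mul_le_mul_of_nonneg_right hE (abs_nonneg _))
  calc |S.φd j z| * |x - y| * |u - v| = |S.φd j z| * (|x - y| * |u - v|) := by ring
    _ ≤ (R * |S.φd j w|) * (|x - y| * |u - v|) := by gcongr
    _ = _ := by ring

lemma expand (j : ℕ) {x y : ℝ} (hx : x ∈ Icc (S.a j) (S.a (j+1)))
    (hy : y ∈ Icc (S.a j) (S.a (j+1))) : |x - y| ≤ |S.φ j x - S.φ j y| := by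
  obtain ⟨z, hz, e1, -⟩ := mvt S j hx hy
  rw [e1]; exact le_mul_of_one_le_left (abs_nonneg _) (one_le_abs S j hz)

lemma expandΛ (j : ℕ) (hj : 1 ≤ j) {x y : ℝ} (hx : x ∈ Icc (S.a j) (S.a (j+1)))
    (hy : y ∈ Icc (S.a j) (S.a (j+1))) : S.Λ * |x - y| ≤ |S.φ j x - S.φ j y| := by
  obtain ⟨z, hz, e1, -⟩ := mvt S j hx hy
  rw [e1]; exact mul_le_mul_of_nonneg_right (S.hA2 j hj z hz) (abs_nonneg _)

lemma mono0 : StrictMonoOn (S.φ 0) (Icc 0 (S.a 1)) := by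
  have h0 := S.ha0
  have hm : MonotoneOn (S.φ 0) (Icc (S.a 0) (S.a 1)) := by
    refine mono_of _ _ _ (S.φd 0) (S.hφ_d 0) ?_
    intro x hx
    rcases hx.1.eq_or_lt with h | h
    · rw [← h, h0, S.hA4_d1]; norm_num
    · rw [h0] at h; linarith [S.hA4_exp x h hx.2]
  rw [h0] at hm
  have hi := (S.hφ_bij 0).injOn
  simp only [zero_add, h0] at hi
  exact hm.strictMonoOn_of_injOn hi

lemma phi0_a1 : S.φ 0 (S.a 1) = 1 := by
  have h0 := S.ha0
  have hp := a1_pos S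
  have hb := S.hφ_bij 0
  simp only [zero_add, h0] at hb
  obtain ⟨x, hx, e⟩ := hb.surjOn (show (1:ℝ) ∈ Icc 0 1 by simp)
  have h1 : S.a 1 ∈ Icc 0 (S.a 1) := ⟨hp.le, le_rfl⟩
  have := (mono0 S).monotoneOn hx h1 hx.2
  have := (hb.mapsTo h1).2
  linarith

/-- the standing assumptions on the sequence `b` -/
structure BSeq (b : ℕ → ℝ) : Prop where
  h0 : b 0 = S.a 1
  pos : ∀ k, 0 < b (k + 1)
  lt : ∀ k, b (k + 1) < b k
  hT : ∀ k, S.T (b (k + 1)) = b k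

/-- the sequence `b` with `1` prepended -/
def cc (b : ℕ → ℝ) : ℕ → ℝ
  | 0 => 1
  | k + 1 => b k

variable {S} {b : ℕ → ℝ}

lemma cc_one (hb : BSeq S b) : cc b 1 = S.a 1 := hb.h0

lemma cc_anti (hb : BSeq S b) : StrictAnti (cc b) := by
  refine strictAnti_nat_of_succ_lt ?_
  intro k
  cases k with
  | zero => rw [zero_add, cc_one hb]; exact S.ha_lt 1
  | succ k => exact hb.lt k

lemma cc_pos (hb : BSeq S b) (k : ℕ) : 0 < cc b k := by
  have h : 0 < cc b (k+2) := hb.pos k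
  exact h.trans (cc_anti hb (by omega))

lemma cc_le (hb : BSeq S b) (k : ℕ) : cc b k ≤ 1 := (cc_anti hb).antitone (Nat.zero_le k)

lemma cc_le_a1 (hb : BSeq S b) (k : ℕ) (hk : 1 ≤ k) : cc b k ≤ S.a 1 := by
  rw [← cc_one hb]; exact (cc_anti hb).antitone hk

lemma cc_mem (hb : BSeq S b) (k : ℕ) (hk : 1 ≤ k) : cc b k ∈ Icc (S.a 0) (S.a (0+1)) := by
  rw [S.ha0]; exact ⟨(cc_pos hb k).le, cc_le_a1 hb k hk⟩

lemma phi_cc (hb : BSeq S b) (k : ℕ) : S.φ 0 (cc b (k+1)) = cc b k := by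
  cases k with
  | zero => rw [zero_add, cc_one hb]; exact phi0_a1 S
  | succ k =>
    have : cc b (k+2) ∈ Ioo (S.a 0) (S.a (0+1)) := by
      rw [S.ha0]; refine ⟨cc_pos hb _, ?_⟩
      rw [zero_add, ← cc_one hb]; exact cc_anti hb (by omega)
    have h := S.hT_eq 0 _ this
    rw [show k + 1 + 1 = k + 2 from rfl, ← h]
    exact hb.hT k

/-- weight of the interval `I_{-k}` -/
noncomputable def W (S : IntervalMapSetup) (b : ℕ → ℝ) (α : ℝ) (k : ℕ) : ℝ :=
  α + cc b (k+1) * Real.exp (3 * S.K * cc b k) / (cc b k - cc b (k+1))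

lemma ell_pos (hb : BSeq S b) (k : ℕ) : 0 < cc b k - cc b (k+1) :=
  sub_pos.2 (cc_anti hb (Nat.lt_succ_self k))

lemma abs_sub_le_of_mem {s t x y : ℝ} (hx : x ∈ Icc s t) (hy : y ∈ Icc s t) : |x - y| ≤ t - s :=
  abs_le.2 ⟨by linarith [hx.1, hy.2], by linarith [hx.2, hy.1]⟩

lemma W_step (hb : BSeq S b) {α : ℝ} (hα : 0 ≤ α) (k : ℕ) {x y : ℝ}
    (hx : x ∈ Icc (cc b (k+2)) (cc b (k+1))) (hy : y ∈ Icc (cc b (k+2)) (cc b (k+1))) :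
    (W S b α (k+1) + 1) * |x - y| ≤ W S b α k * |S.φ 0 x - S.φ 0 y| := by
  have hsub : Icc (cc b (k+2)) (cc b (k+1)) ⊆ Icc (S.a 0) (S.a (0+1)) :=
    Icc_subset_Icc (cc_mem hb _ (by omega)).1 (cc_mem hb _ (by omega)).2
  have hK := S.hK
  have hl0 := ell_pos hb k
  have hl1 := ell_pos hb (k+1)
  have hu : cc b (k+1) ∈ Icc (cc b (k+2)) (cc b (k+1)) := ⟨by linarith, le_rfl⟩
  have hv : cc b (k+2) ∈ Icc (cc b (k+2)) (cc b (k+1)) := ⟨le_rfl, by linarith⟩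
  have him : ∀ z ∈ Icc (cc b (k+2)) (cc b (k+1)), S.φ 0 z ∈ Icc (cc b (k+1)) (cc b k) := by
    intro z hz
    have hm := (mono0 S).monotoneOn
    have e := S.ha0
    simp only [e, zero_add] at hsub
    exact ⟨by rw [← phi_cc hb (k+1)]; exact hm (hsub hv) (hsub hz) hz.1,
      by rw [← phi_cc hb k]; exact hm (hsub hz) (hsub hu) hz.2⟩
  have hd := branch_dist S 0 (hsub hu) (hsub hv) (hsub hx) (hsub hy)
  have r1 := abs_sub_le_of_mem (him _ hu) (him _ hv)
  have r2 := abs_sub_le_of_mem (him _ hv) (him _ hx)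
  have r3 := abs_sub_le_of_mem (him _ hx) (him _ hy)
  have hE := Real.exp_le_exp.2 (mul_le_mul_of_nonneg_left (add_le_add (add_le_add r1 r2) r3) hK.le)
  have hd := hd.trans (mul_le_mul_of_nonneg_right hE (by positivity))
  rw [phi_cc hb, show k + 2 = (k+1)+1 from rfl, phi_cc hb, abs_of_pos hl0, abs_of_pos hl1] at hd
  have hex := expand S 0 (hsub hx) (hsub hy)
  unfold W
  set d := |x - y|
  set e := |S.φ 0 x - S.φ 0 y|
  set l0 := cc b k - cc b (k+1) with hl0d
  set l1 := cc b (k+1) - cc b (k+1+1) with hl1d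
  have hd0 : 0 ≤ d := abs_nonneg _
  have he0 : 0 ≤ e := abs_nonneg _
  have hE1 : 1 ≤ Real.exp (3 * S.K * cc b (k+1)) :=
    Real.one_le_exp (by have := cc_pos hb (k+1); positivity)
  have hEE : Real.exp (3 * S.K * cc b k) = Real.exp (3 * S.K * cc b (k+1)) * Real.exp (S.K * (l0 + l0 + l0)) := by
    rw [← Real.exp_add]; congr 1; rw [hl0d]; ring
  rw [hEE]
  set F := Real.exp (3 * S.K * cc b (k+1))
  set R := Real.exp (S.K * (l0 + l0 + l0))
  have hc := cc_pos hb (k+1)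
  have hc2 := cc_pos hb (k+1+1)
  have main : (cc b (k+1+1) * F / l1 + 1) * d ≤ cc b (k+1) * (F * R) / l0 * e := by
    calc (cc b (k+1+1) * F / l1 + 1) * d ≤ (cc b (k+1+1) * F / l1 + F) * d := by gcongr
      _ = cc b (k+1) * F * (d / l1) := by
        field_simp; rw [hl1d]; ring
      _ ≤ cc b (k+1) * F * (R * e / l0) := by
        gcongr ?_ * ?_
        rw [div_le_div_iff₀ hl1 hl0]
        calc d * l0 = l0 * d := by ring
          _ ≤ R * (e * l1) := hd
          _ = _ := by ring
      _ = _ := by ring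
  have : α * d ≤ α * e := by gcongr
  calc (α + cc b (k+1+1) * F / l1 + 1) * d = α * d + (cc b (k+1+1) * F / l1 + 1) * d := by ring
    _ ≤ α * e + cc b (k+1) * (F * R) / l0 * e := add_le_add this main
    _ = _ := by ring

/-- open version of the refined partition elements -/
def J (S : IntervalMapSetup) (b : ℕ → ℝ) (j : ℤ) : Set ℝ :=
  if 1 ≤ j then Ioo (S.a j.toNat) (S.a (j.toNat + 1))
  else Ioo (cc b ((-j).toNat + 1)) (cc b (-j).toNat)

/-- branch number -/
def br (j : ℤ) : ℕ := if 1 ≤ j then j.toNat else 0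

lemma J_sub (hb : BSeq S b) {j : ℤ} (hj : j ≠ 0) : J S b j ⊆ Ioo (S.a (br j)) (S.a (br j + 1)) := by
  unfold J br
  split_ifs with h
  · exact subset_rfl
  · intro x hx
    rw [S.ha0]
    exact ⟨(cc_pos hb _).trans hx.1, hx.2.trans_le (cc_le_a1 hb _ (by omega))⟩

lemma J_sub' (hb : BSeq S b) {j : ℤ} (hj : j ≠ 0) : J S b j ⊆ Icc (S.a (br j)) (S.a (br j + 1)) :=
  (J_sub hb hj).trans Ioo_subset_Icc_self

lemma T_eq (hb : BSeq S b) {j : ℤ} (hj : j ≠ 0) {x : ℝ} (hx : x ∈ J S b j) :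
    S.T x = S.φ (br j) x := S.hT_eq _ _ (J_sub hb hj hx)

lemma a_nonneg (j : ℕ) : 0 ≤ S.a j := by
  rw [← S.ha0]; exact S.ha_mono.monotone (Nat.zero_le j)

lemma J_unit (hb : BSeq S b) {j : ℤ} (hj : j ≠ 0) : J S b j ⊆ Icc 0 1 := by
  intro x hx
  have := J_sub hb hj hx
  exact ⟨(a_nonneg _).trans this.1.le, this.2.le.trans (S.ha_lt _).le⟩

/-- weight of a partition element -/
noncomputable def V (S : IntervalMapSetup) (b : ℕ → ℝ) (α M : ℝ) (j : ℤ) : ℝ :=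
  if 1 ≤ j then M else W S b α (-j).toNat

lemma W_ge (hb : BSeq S b) (α : ℝ) (k : ℕ) : α ≤ W S b α k := by
  unfold W
  have := ell_pos hb k
  have := cc_pos hb (k+1)
  have : 0 ≤ cc b (k+1) * Real.exp (3 * S.K * cc b k) / (cc b k - cc b (k+1)) := by positivity
  linarith

lemma V_step (hb : BSeq S b) {α M : ℝ} (hα : 0 ≤ α) (h1 : M + 1 ≤ S.Λ * α)
    (h2 : W S b α 0 ≤ M) {j j' : ℤ} (hj : j ≠ 0) (hj' : j' ≠ 0) {x y : ℝ}
    (hx : x ∈ J S b j) (hy : y ∈ J S b j) (hx' : S.T x ∈ J S b j') :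
    (V S b α M j + 1) * |x - y| ≤ V S b α M j' * |S.T x - S.T y| := by
  rw [T_eq hb hj hx] at hx' ⊢
  rw [T_eq hb hj hy]
  by_cases h : 1 ≤ j
  · have hV : α ≤ V S b α M j' := by
      unfold V; split_ifs
      · exact (W_ge hb α 0).trans h2
      · exact W_ge hb α _
    have he := expandΛ S (br j) (by unfold br; rw [if_pos h]; omega) (J_sub' hb hj hx) (J_sub' hb hj hy)
    have : V S b α M j = M := if_pos h
    rw [this]
    calc (M + 1) * |x - y| ≤ (S.Λ * α) * |x - y| := by gcongr
      _ = α * (S.Λ * |x - y|) := by ring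
      _ ≤ α * |S.φ (br j) x - S.φ (br j) y| := by gcongr
      _ ≤ _ := by gcongr
  · obtain ⟨k, hk⟩ : ∃ k : ℕ, (-j).toNat = k + 1 := ⟨(-j).toNat - 1, by omega⟩
    have hbr : br j = 0 := if_neg h
    have hVj : V S b α M j = W S b α (k+1) := by unfold V; rw [if_neg h, hk]
    have hJ : J S b j = Ioo (cc b (k+2)) (cc b (k+1)) := by unfold J; rw [if_neg h, hk]
    rw [hbr] at hx' ⊢
    rw [hJ] at hx hy
    have hs := W_step hb hα k (Ioo_subset_Icc_self hx) (Ioo_subset_Icc_self hy)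
    rw [hVj]
    refine hs.trans (mul_le_mul_of_nonneg_right ?_ (abs_nonneg _))
    have hm := mono0 S
    have hI : ∀ z ∈ Icc (cc b (k+2)) (cc b (k+1)), z ∈ Icc 0 (S.a 1) := fun z hz =>
      ⟨(cc_pos hb _).le.trans hz.1, hz.2.trans (cc_le_a1 hb _ (by omega))⟩
    have hlt := ell_pos hb (k+1)
    have lo : cc b (k+1) < S.φ 0 x := by
      rw [← phi_cc hb (k+1)]
      exact hm (hI _ ⟨le_rfl, by linarith⟩) (hI _ (Ioo_subset_Icc_self hx)) hx.1
    have hi : S.φ 0 x < cc b k := by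
      rw [← phi_cc hb k]
      exact hm (hI _ (Ioo_subset_Icc_self hx)) (hI _ ⟨by linarith, le_rfl⟩) hx.2
    have hanti := cc_anti hb
    by_cases h' : 1 ≤ j'
    · have : V S b α M j' = M := if_pos h'
      rw [this]
      unfold J at hx'; rw [if_pos h'] at hx'
      cases k with
      | zero => exact h2
      | succ k =>
        exfalso
        have e1 := cc_le_a1 hb (k+1) (by omega)
        have e2 := S.ha_mono.monotone (show 1 ≤ j'.toNat by omega)
        linarith [hx'.1]
    · have : V S b α M j' = W S b α (-j').toNat := if_neg h'
      rw [this]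
      unfold J at hx'; rw [if_neg h'] at hx'
      have e1 := hanti.lt_iff_gt.1 (lo.trans hx'.2)
      have e2 := hanti.lt_iff_gt.1 (hx'.1.trans hi)
      have : (-j').toNat = k := by omega
      rw [this]

lemma V_bound (hb : BSeq S b) {α M : ℝ} (hα : 0 ≤ α) (hM : 0 ≤ M) {j : ℤ} (hj : j ≠ 0)
    {x y : ℝ} (hx : x ∈ J S b j) (hy : y ∈ J S b j) :
    V S b α M j * |x - y| ≤ M + α + Real.exp (3 * S.K) := by
  have hxy := abs_sub_le_of_mem (J_unit hb hj hx) (J_unit hb hj hy)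
  have hE := Real.exp_pos (3 * S.K)
  have hK := S.hK
  unfold V
  split_ifs with h
  · nlinarith
  · unfold J at hx hy
    rw [if_neg h] at hx hy
    set k := (-j).toNat
    have hl := ell_pos hb k
    have hd := abs_sub_le_of_mem (Ioo_subset_Icc_self hx) (Ioo_subset_Icc_self hy)
    unfold W
    have hc := cc_pos hb (k+1)
    have hc1 := cc_le hb (k+1)
    have hc0 := cc_le hb k
    have e1 : cc b (k+1) * Real.exp (3 * S.K * cc b k) / (cc b k - cc b (k+1)) * |x - y| ≤ Real.exp (3 * S.K) := by
      calc _ ≤ cc b (k+1) * Real.exp (3 * S.K * cc b k) / (cc b k - cc b (k+1)) * (cc b k - cc b (k+1)) := by gcongr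
        _ = cc b (k+1) * Real.exp (3 * S.K * cc b k) := by field_simp
        _ ≤ 1 * Real.exp (3 * S.K * 1) := by gcongr
        _ = _ := by simp
    nlinarith

/-- points whose first `n+1` iterates visit the open partition elements -/
def Gd (S : IntervalMapSetup) (b : ℕ → ℝ) (n : ℕ) (js : ℕ → ℤ) : Set ℝ :=
  {x | ∀ i ≤ n, S.T^[i] x ∈ J S b (js i)}

lemma sum_le (hb : BSeq S b) {α M : ℝ} (hα : 0 ≤ α) (h1 : M + 1 ≤ S.Λ * α)
    (h2 : W S b α 0 ≤ M) {n : ℕ} {js : ℕ → ℤ} (hjs : ∀ k, k ≤ n → js k ≠ 0) {x y : ℝ}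
    (hx : x ∈ Gd S b n js) (hy : y ∈ Gd S b n js) (N : ℕ) (hN : N ≤ n) :
    ∑ i ∈ Finset.range N, |S.T^[i] x - S.T^[i] y| ≤ V S b α M (js N) * |S.T^[N] x - S.T^[N] y| := by
  induction N with
  | zero =>
    have hV : 0 ≤ V S b α M (js 0) := by
      unfold V; split_ifs
      · exact hα.trans ((W_ge hb α 0).trans h2)
      · exact hα.trans (W_ge hb α _)
    simp; positivity
  | succ N ih =>
    have ih := ih (by omega)
    rw [Finset.sum_range_succ]
    have hx' := hx (N+1) hN
    rw [Function.iterate_succ_apply'] at hx'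
    have := V_step hb hα h1 h2 (hjs N (by omega)) (hjs (N+1) hN) (hx N (by omega)) (hy N (by omega)) hx'
    rw [Function.iterate_succ_apply', Function.iterate_succ_apply']
    linarith

lemma unit_iter (hb : BSeq S b) {n : ℕ} {js : ℕ → ℤ} (hjs : ∀ k, k ≤ n → js k ≠ 0) {x : ℝ}
    (hx : x ∈ Gd S b n js) (N : ℕ) (hN : N ≤ n + 1) : S.T^[N] x ∈ Icc 0 1 := by
  rcases Nat.lt_or_ge n N with h | h
  · obtain rfl : N = n + 1 := by omega
    rw [Function.iterate_succ_apply']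
    exact S.hT_maps (J_unit hb (hjs n le_rfl) (hx n le_rfl))
  · exact J_unit hb (hjs N h) (hx N h)

lemma sum_bound (hb : BSeq S b) {α M : ℝ} (hα : 0 ≤ α) (h1 : M + 1 ≤ S.Λ * α)
    (h2 : W S b α 0 ≤ M) {n : ℕ} {js : ℕ → ℤ} (hjs : ∀ k, k ≤ n → js k ≠ 0) {x y : ℝ}
    (hx : x ∈ Gd S b n js) (hy : y ∈ Gd S b n js) :
    ∑ i ∈ Finset.range (n+2), |S.T^[i] x - S.T^[i] y| ≤ M + α + Real.exp (3 * S.K) + 2 := by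
  have hM : 0 ≤ M := hα.trans ((W_ge hb α 0).trans h2)
  rw [Finset.sum_range_succ, Finset.sum_range_succ]
  have e1 := sum_le hb hα h1 h2 hjs hx hy n le_rfl
  have e2 := V_bound hb hα hM (hjs n le_rfl) (hx n le_rfl) (hy n le_rfl)
  have e3 := abs_sub_le_of_mem (unit_iter hb hjs hx n (by omega)) (unit_iter hb hjs hy n (by omega))
  have e4 := abs_sub_le_of_mem (unit_iter hb hjs hx (n+1) (by omega)) (unit_iter hb hjs hy (n+1) (by omega))
  linarith

lemma iter_expand (hb : BSeq S b) {n : ℕ} {js : ℕ → ℤ} (hjs : ∀ k, k ≤ n → js k ≠ 0) {u v : ℝ}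
    (hu : u ∈ Gd S b n js) (hv : v ∈ Gd S b n js) (N : ℕ) (hN : N ≤ n + 1) :
    |u - v| ≤ |S.T^[N] u - S.T^[N] v| := by
  induction N with
  | zero => simp
  | succ N ih =>
    refine (ih (by omega)).trans ?_
    have hj := hjs N (by omega)
    rw [Function.iterate_succ_apply', Function.iterate_succ_apply',
      T_eq hb hj (hu N (by omega)), T_eq hb hj (hv N (by omega))]
    exact expand S _ (J_sub' hb hj (hu N (by omega))) (J_sub' hb hj (hv N (by omega)))

lemma iter_dist (hb : BSeq S b) {n : ℕ} {js : ℕ → ℤ} (hjs : ∀ k, k ≤ n → js k ≠ 0) {x y u v : ℝ}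
    (hx : x ∈ Gd S b n js) (hy : y ∈ Gd S b n js)
    (hu : u ∈ Gd S b n js) (hv : v ∈ Gd S b n js) (huv : u ≠ v) (N : ℕ) (hN : N ≤ n + 1) :
    |S.T^[N] x - S.T^[N] y| * |u - v| ≤ Real.exp (S.K * (
      ∑ i ∈ Finset.range (N+1), |S.T^[i] x - S.T^[i] y| +
      ∑ i ∈ Finset.range (N+1), |S.T^[i] y - S.T^[i] u| +
      ∑ i ∈ Finset.range (N+1), |S.T^[i] u - S.T^[i] v|)) * (|S.T^[N] u - S.T^[N] v| * |x - y|) := by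
  have hK := S.hK
  induction N with
  | zero =>
    rw [mul_comm]
    refine le_mul_of_one_le_left ?_ (Real.one_le_exp ?_)
    · positivity
    · positivity
  | succ N ih =>
    have ih := ih (by omega)
    have hj := hjs N (by omega)
    have hU : 0 < |S.T^[N] u - S.T^[N] v| :=
      (abs_pos.2 (sub_ne_zero.2 huv)).trans_le (iter_expand hb hjs hu hv N (by omega))
    have hd := branch_dist S _ (J_sub' hb hj (hx N (by omega))) (J_sub' hb hj (hy N (by omega)))
      (J_sub' hb hj (hu N (by omega))) (J_sub' hb hj (hv N (by omega)))
    rw [← T_eq hb hj (hx N (by omega)), ← T_eq hb hj (hy N (by omega)),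
      ← T_eq hb hj (hu N (by omega)), ← T_eq hb hj (hv N (by omega)),
      ← Function.iterate_succ_apply' S.T, ← Function.iterate_succ_apply' S.T,
      ← Function.iterate_succ_apply' S.T, ← Function.iterate_succ_apply' S.T] at hd
    rw [Finset.sum_range_succ _ (N+1), Finset.sum_range_succ _ (N+1), Finset.sum_range_succ _ (N+1)]
    set s1 := ∑ i ∈ Finset.range (N+1), |S.T^[i] x - S.T^[i] y|
    set s2 := ∑ i ∈ Finset.range (N+1), |S.T^[i] y - S.T^[i] u|
    set s3 := ∑ i ∈ Finset.range (N+1), |S.T^[i] u - S.T^[i] v|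
    set p := |S.T^[N+1] x - S.T^[N+1] y|
    set q := |S.T^[N+1] y - S.T^[N+1] u|
    set r := |S.T^[N+1] u - S.T^[N+1] v|
    have hEE : Real.exp (S.K * (s1 + p + (s2 + q) + (s3 + r))) =
        Real.exp (S.K * (p + q + r)) * Real.exp (S.K * (s1 + s2 + s3)) := by
      rw [← Real.exp_add]; congr 1; ring
    rw [hEE]
    set X := Real.exp (S.K * (p + q + r))
    set Y := Real.exp (S.K * (s1 + s2 + s3))
    set A := |S.T^[N] x - S.T^[N] y|
    set U := |S.T^[N] u - S.T^[N] v|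
    have hr : 0 ≤ r := abs_nonneg _
    have hX : 0 ≤ X := (Real.exp_pos _).le
    refine le_of_mul_le_mul_right ?_ hU
    calc p * |u - v| * U = (p * U) * |u - v| := by ring
      _ ≤ (X * (r * A)) * |u - v| := by gcongr
      _ = X * r * (A * |u - v|) := by ring
      _ ≤ X * r * (Y * (U * |x - y|)) := by gcongr
      _ = _ := by ring

lemma vol_lip {f : ℝ → ℝ} {s : Set ℝ} {L : ℝ} (hL : 0 ≤ L)
    (h : ∀ x ∈ s, ∀ y ∈ s, |f x - f y| ≤ L * |x - y|) :
    volume (f '' s) ≤ ENNReal.ofReal L * volume s := by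
  have hl : LipschitzOnWith (Real.toNNReal L) f s := by
    refine LipschitzOnWith.of_dist_le_mul ?_
    intro x hx y hy
    rw [Real.coe_toNNReal L hL, Real.dist_eq, Real.dist_eq]
    exact h x hx y hy
  have := hl.hausdorffMeasure_image_le (d := 1) zero_le_one
  rw [hausdorffMeasure_real] at this
  simpa [ENNReal.ofReal] using this

lemma vol_dist {f : ℝ → ℝ} {G B I : Set ℝ} {D : ℝ} (hD : 0 ≤ D)
    (h : ∀ x ∈ G, ∀ y ∈ G, ∀ u ∈ G, ∀ v ∈ G, u ≠ v →
      |f x - f y| * |u - v| ≤ D * (|f u - f v| * |x - y|))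
    (hI : f '' G ⊆ I) (hB : B ⊆ G) (hG : 0 < volume G) :
    volume (f '' B) * volume G ≤ ENNReal.ofReal (D ^ 2) * volume B * volume I := by
  have hnt : G.Nontrivial := by
    by_contra hn
    rw [Set.not_nontrivial_iff] at hn
    exact hG.ne' (hn.measure_zero _)
  obtain ⟨u, hu, v, hv, huv⟩ := hnt
  have hd : 0 < |u - v| := abs_pos.2 (sub_ne_zero.2 huv)
  by_cases hr : f u = f v
  · have : (f '' B).Subsingleton := by
      rintro _ ⟨x, hx, rfl⟩ _ ⟨y, hy, rfl⟩
      have := h x (hB hx) y (hB hy) u hu v hv huv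
      rw [hr, sub_self, abs_zero, zero_mul, mul_zero] at this
      have h0 : |f x - f y| ≤ 0 := by
        by_contra hc
        push Not at hc
        nlinarith [mul_pos hc hd]
      exact sub_eq_zero.1 (abs_eq_zero.1 (le_antisymm h0 (abs_nonneg _)))
    rw [this.measure_zero, zero_mul]; exact zero_le
  · have hr : 0 < |f u - f v| := abs_pos.2 (sub_ne_zero.2 hr)
    set r := |f u - f v| / |u - v| with hrd
    have hrp : 0 < r := by positivity
    have l1 : volume (f '' B) ≤ ENNReal.ofReal (D * r) * volume B := by
      refine vol_lip (by positivity) ?_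
      intro x hx y hy
      have := h x (hB hx) y (hB hy) u hu v hv huv
      rw [hrd, ← mul_div_assoc, div_mul_eq_mul_div, le_div_iff₀ hd]
      linarith
    have anti : ∀ x ∈ G, ∀ y ∈ G, |x - y| ≤ D / r * |f x - f y| := by
      intro x hx y hy
      by_cases hxy : x = y
      · subst hxy; simp
      have := h u hu v hv x hx y hy hxy
      rw [div_mul_eq_mul_div, le_div_iff₀ hrp, hrd, ← mul_div_assoc, div_le_iff₀ hd]
      linarith
    have hinj : InjOn f G := by
      intro x hx y hy e
      have := anti x hx y hy
      rw [e, sub_self, abs_zero, mul_zero] at this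
      exact sub_eq_zero.1 (abs_eq_zero.1 (le_antisymm this (abs_nonneg _)))
    have l2 : volume G ≤ ENNReal.ofReal (D / r) * volume (f '' G) := by
      have hg := hinj.leftInvOn_invFunOn
      have := vol_lip (f := Function.invFunOn f G) (s := f '' G) (L := D / r) (by positivity) (by
        rintro _ ⟨x, hx, rfl⟩ _ ⟨y, hy, rfl⟩
        rw [hg hx, hg hy]; exact anti x hx y hy)
      rwa [hg.image_image] at this
    calc volume (f '' B) * volume G
        ≤ (ENNReal.ofReal (D * r) * volume B) * (ENNReal.ofReal (D / r) * volume I) := by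
          gcongr
          exact l2.trans (by gcongr)
      _ = (ENNReal.ofReal (D * r) * ENNReal.ofReal (D / r)) * volume B * volume I := by ring
      _ = _ := by
          rw [← ENNReal.ofReal_mul (by positivity)]
          have e : D * r * (D / r) = D ^ 2 := by field_simp
          rw [e]

lemma preimage_countable (S : IntervalMapSetup) {C : Set ℝ} (hC : C.Countable) : (Icc 0 1 ∩ S.T ⁻¹' C).Countable := by
  have hsub : Icc 0 1 ∩ S.T ⁻¹' C ⊆ (range S.a ∪ {1}) ∪ ⋃ j, (Ioo (S.a j) (S.a (j+1)) ∩ S.T ⁻¹' C) := by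
    rintro x ⟨hx, hxC⟩
    by_cases h1 : x = 1
    · left; right; exact h1
    by_cases hr : x ∈ range S.a
    · left; left; exact hr
    right
    have hlt : x < 1 := lt_of_le_of_ne hx.2 h1
    have hex : ∃ j, x < S.a j := (S.ha_lim.eventually (lt_mem_nhds hlt)).exists
    classical
    have h0 : Nat.find hex ≠ 0 := by
      intro h; have := Nat.find_spec hex; rw [h, S.ha0] at this; linarith [hx.1]
    obtain ⟨k, hk⟩ := Nat.exists_eq_succ_of_ne_zero h0
    have hk1 := Nat.find_spec hex
    have hk2 := Nat.find_min hex (m := k) (by omega)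
    rw [hk] at hk1
    refine mem_iUnion.2 ⟨k, ⟨?_, hk1⟩, hxC⟩
    exact lt_of_le_of_ne (not_lt.1 hk2) (fun h => hr ⟨k, h⟩)
  refine Countable.mono hsub (((countable_range _).union (countable_singleton _)).union (countable_iUnion fun j => ?_))
  have hm : MapsTo S.T (Ioo (S.a j) (S.a (j+1)) ∩ S.T ⁻¹' C) C := fun x hx => hx.2
  refine hm.countable_of_injOn ?_ hC
  intro x hx y hy e
  rw [S.hT_eq j x hx.1, S.hT_eq j y hy.1] at e
  exact (S.hφ_bij j).injOn (Ioo_subset_Icc_self hx.1) (Ioo_subset_Icc_self hy.1) e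

lemma iter_countable (S : IntervalMapSetup) {C : Set ℝ} (hC : C.Countable) (i : ℕ) : (Icc 0 1 ∩ S.T^[i] ⁻¹' C).Countable := by
  induction i with
  | zero => exact hC.mono (fun x hx => hx.2)
  | succ i ih =>
    refine (preimage_countable S ih).mono ?_
    rintro x ⟨hx, h⟩
    exact ⟨hx, S.hT_maps hx, h⟩

lemma mem_cyl {n : ℕ} {js : ℕ → ℤ} {x : ℝ} :
    x ∈ cylSet S b (n+1) js ↔ ∀ i ≤ n, S.T^[i] x ∈ refIo S b (js i) := by
  simp [cylSet, Nat.lt_succ_iff]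

lemma ref_eq {j : ℤ} (hj : j ≠ 0) : refIo S b j =
    if 1 ≤ j then Icc (S.a j.toNat) (S.a (j.toNat + 1))
      else Icc (cc b ((-j).toNat + 1)) (cc b (-j).toNat) := by
  unfold refIo
  split_ifs with h
  · rfl
  · obtain ⟨k, hk⟩ : ∃ k : ℕ, (-j).toNat = k + 1 := ⟨(-j).toNat - 1, by omega⟩
    rw [hk]; rfl

lemma J_sub_ref {j : ℤ} (hj : j ≠ 0) : J S b j ⊆ refIo S b j := by
  rw [ref_eq hj]; unfold J
  split_ifs <;> exact Ioo_subset_Icc_self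

lemma ref_unit (hb : BSeq S b) {j : ℤ} (hj : j ≠ 0) : refIo S b j ⊆ Icc 0 1 := by
  rw [ref_eq hj]
  split_ifs
  · exact Icc_subset_Icc (a_nonneg _) (S.ha_lt _).le
  · exact Icc_subset_Icc (cc_pos hb _).le (cc_le hb _)

lemma ref_vol_pos (hb : BSeq S b) {j : ℤ} (hj : j ≠ 0) : 0 < volume (refIo S b j) := by
  rw [ref_eq hj]
  split_ifs
  · rw [Real.volume_Icc, ENNReal.ofReal_pos, sub_pos]; exact S.ha_mono (Nat.lt_succ_self _)
  · rw [Real.volume_Icc, ENNReal.ofReal_pos]; exact ell_pos hb _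

lemma ref_J {j : ℤ} (hj : j ≠ 0) {x : ℝ} (hx : x ∈ refIo S b j)
    (h : x ∉ range S.a ∪ range (cc b)) : x ∈ J S b j := by
  rw [mem_union, not_or] at h
  rw [ref_eq hj] at hx
  unfold J
  split_ifs at hx ⊢
  · exact ⟨lt_of_le_of_ne hx.1 fun e => h.1 ⟨_, e⟩, lt_of_le_of_ne hx.2 fun e => h.1 ⟨_, e.symm⟩⟩
  · exact ⟨lt_of_le_of_ne hx.1 fun e => h.2 ⟨_, e⟩, lt_of_le_of_ne hx.2 fun e => h.2 ⟨_, e.symm⟩⟩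

lemma bad_countable (hb : BSeq S b) {n : ℕ} {js : ℕ → ℤ} (hjs : ∀ k, k ≤ n → js k ≠ 0) :
    (cylSet S b (n+1) js \ Gd S b n js).Countable := by
  have hC : (range S.a ∪ range (cc b)).Countable := (countable_range _).union (countable_range _)
  refine (countable_iUnion fun i => iter_countable S hC i).mono ?_
  rintro x ⟨hx, hxG⟩
  rw [mem_cyl] at hx
  simp only [Gd, mem_setOf_eq, not_forall] at hxG
  obtain ⟨i, hi, hn⟩ := hxG
  refine mem_iUnion.2 ⟨i, ref_unit hb (hjs 0 (Nat.zero_le n)) (hx 0 (Nat.zero_le n)), ?_⟩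
  by_contra hc
  exact hn (ref_J (hjs i hi) (hx i hi) hc)

lemma Gd_sub {n : ℕ} {js : ℕ → ℤ} (hjs : ∀ k, k ≤ n → js k ≠ 0) :
    Gd S b n js ⊆ cylSet S b (n+1) js := by
  intro x hx
  exact mem_cyl.2 fun i hi => J_sub_ref (hjs i hi) (hx i hi)

lemma exists_weights (hb : BSeq S b) : ∃ α M : ℝ, 0 ≤ α ∧ M + 1 ≤ S.Λ * α ∧ W S b α 0 ≤ M := by
  have hΛ := S.hΛ
  set A := W S b 0 0 with hA
  have hA0 : 0 ≤ A := W_ge hb 0 0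
  have h1 : 0 < S.Λ - 1 := by linarith
  refine ⟨(1 + A) / (S.Λ - 1), (1 + A) / (S.Λ - 1) + A, by positivity, ?_, ?_⟩
  · have : (1 + A) / (S.Λ - 1) * (S.Λ - 1) = 1 + A := by field_simp
    nlinarith
  · have : W S b ((1 + A) / (S.Λ - 1)) 0 = (1 + A) / (S.Λ - 1) + A := by
      rw [hA]; unfold W; ring
    exact this.le

/-- the measure estimate for `T^N`, `N ≤ n+1` -/
lemma main_est (hb : BSeq S b) : ∃ D : ℝ, 1 < D ∧ ∀ (n : ℕ) (js : ℕ → ℤ), (∀ k, k ≤ n → js k ≠ 0) →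
    0 < volume (cylSet S b (n + 1) js) → ∀ B ⊆ cylSet S b (n + 1) js, ∀ N ≤ n + 1, ∀ I : Set ℝ,
    S.T^[N] '' (cylSet S b (n+1) js) ⊆ I →
    volume (S.T^[N] '' B) * volume (cylSet S b (n + 1) js) ≤ ENNReal.ofReal D * volume B * volume I := by
  obtain ⟨α, M, hα, h1, h2⟩ := exists_weights hb
  have hM : 0 ≤ M := hα.trans ((W_ge hb α 0).trans h2)
  have hK := S.hK
  set Q := M + α + Real.exp (3 * S.K) + 2 with hQ
  have hQ0 : 0 < Q := by positivity
  refine ⟨Real.exp (S.K * (Q + Q + Q)) ^ 2, ?_, ?_⟩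
  · exact one_lt_pow₀ (Real.one_lt_exp_iff.2 (by positivity)) (by norm_num)
  intro n js hjs hpos B hB N hN I hI
  have hbad := bad_countable hb hjs (b := b)
  have hsub := Gd_sub hjs (S := S) (b := b)
  have hvG : volume (Gd S b n js) = volume (cylSet S b (n+1) js) := by
    refine le_antisymm (measure_mono hsub) ?_
    calc volume (cylSet S b (n+1) js) ≤ volume (Gd S b n js ∪ (cylSet S b (n+1) js \ Gd S b n js)) := by
          rw [union_diff_self]; exact measure_mono subset_union_right
      _ ≤ volume (Gd S b n js) + volume (cylSet S b (n+1) js \ Gd S b n js) := measure_union_le _ _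
      _ = _ := by rw [hbad.measure_zero, add_zero]
  have hvB : volume (S.T^[N] '' B) ≤ volume (S.T^[N] '' (B ∩ Gd S b n js)) := by
    have hc : (S.T^[N] '' (B \ Gd S b n js)).Countable :=
      (hbad.mono (diff_subset_diff_left hB)).image _
    calc volume (S.T^[N] '' B) = volume (S.T^[N] '' (B ∩ Gd S b n js) ∪ S.T^[N] '' (B \ Gd S b n js)) := by
          rw [← image_union, inter_union_diff]
      _ ≤ volume (S.T^[N] '' (B ∩ Gd S b n js)) + volume (S.T^[N] '' (B \ Gd S b n js)) := measure_union_le _ _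
      _ = _ := by rw [hc.measure_zero, add_zero]
  have hmain := vol_dist (f := S.T^[N]) (G := Gd S b n js) (B := B ∩ Gd S b n js) (I := I)
    (D := Real.exp (S.K * (Q + Q + Q))) (Real.exp_pos _).le (by
      intro x hx y hy u hu v hv huv
      refine (iter_dist hb hjs hx hy hu hv huv N hN).trans ?_
      have key : ∀ p ∈ Gd S b n js, ∀ q ∈ Gd S b n js,
          ∑ i ∈ Finset.range (N+1), |S.T^[i] p - S.T^[i] q| ≤ Q := by
        intro p hp q hq
        refine le_trans ?_ (sum_bound hb hα h1 h2 hjs hp hq)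
        exact Finset.sum_le_sum_of_subset_of_nonneg (Finset.range_mono (by omega)) (fun _ _ _ => abs_nonneg _)
      gcongr
      · exact key x hx y hy
      · exact key y hy u hu
      · exact key u hu v hv) ((image_mono hsub).trans hI) inter_subset_right (by rwa [hvG])
  rw [← hvG]
  calc _ ≤ volume (S.T^[N] '' (B ∩ Gd S b n js)) * volume (Gd S b n js) := by gcongr
    _ ≤ _ := hmain
    _ ≤ _ := by gcongr; exact inter_subset_left

end DL

/-- Distortion Lemma: there is `D > 1` such that for every `n`, every
admissible string `(j_0, …, j_n)` of nonzero indices with a positive-measure cylinder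
and at least one positive component, and every Borel `B ⊆ I_{j^{n+1}}`:
(i) `Tⁿ B ⊆ I_{j_n}`; (ii) `Leb(Tⁿ B)/Leb(I_{j_n}) ≤ D · Leb(B)/Leb(I_{j^{n+1}})`;
(iii) `Leb(T^{n+1} B) ≤ D · Leb(B)/Leb(I_{j^{n+1}})`. -/
theorem distortion_lemma (S : IntervalMapSetup) (b : ℕ → ℝ) (hb0 : b 0 = S.a 1)
    (hb_pos : ∀ k, 0 < b (k + 1)) (hb_lt : ∀ k, b (k + 1) < b k)
    (hb_T : ∀ k, S.T (b (k + 1)) = b k) :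
    ∃ D : ℝ, 1 < D ∧
      ∀ (n : ℕ) (js : ℕ → ℤ), (∀ k, k ≤ n → js k ≠ 0) →
        0 < volume (cylSet S b (n + 1) js) → (∃ k, k ≤ n ∧ 1 ≤ js k) →
        ∀ B : Set ℝ, B ⊆ cylSet S b (n + 1) js → MeasurableSet B →
          S.T^[n] '' B ⊆ refIo S b (js n) ∧
          volume (S.T^[n] '' B) / volume (refIo S b (js n)) ≤
            ENNReal.ofReal D * (volume B / volume (cylSet S b (n + 1) js)) ∧
          volume (S.T^[n + 1] '' B) ≤
            ENNReal.ofReal D * (volume B / volume (cylSet S b (n + 1) js)) := by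
  have hb : DL.BSeq S b := ⟨hb0, hb_pos, hb_lt, hb_T⟩
  obtain ⟨D, hD, hmain⟩ := DL.main_est hb
  refine ⟨D, hD, ?_⟩
  intro n js hjs hpos _ B hB _
  have hcyl : ∀ x ∈ cylSet S b (n + 1) js, S.T^[n] x ∈ refIo S b (js n) := fun x hx =>
    DL.mem_cyl.1 hx n le_rfl
  have hfin : volume (cylSet S b (n + 1) js) ≠ ⊤ := by
    have : cylSet S b (n + 1) js ⊆ Icc 0 1 := fun x hx =>
      DL.ref_unit hb (hjs 0 (Nat.zero_le n)) (DL.mem_cyl.1 hx 0 (Nat.zero_le n))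
    exact ((measure_mono this).trans_lt (by simp)).ne
  have hrfin : volume (refIo S b (js n)) ≠ ⊤ :=
    ((measure_mono (DL.ref_unit hb (hjs n le_rfl))).trans_lt (by simp)).ne
  have hrpos := DL.ref_vol_pos hb (hjs n le_rfl)
  refine ⟨?_, ?_, ?_⟩
  · rintro _ ⟨x, hx, rfl⟩
    exact hcyl x (hB hx)
  · have h := hmain n js hjs hpos B hB n (by omega) (refIo S b (js n)) (by
      rintro _ ⟨x, hx, rfl⟩; exact hcyl x hx)
    rw [ENNReal.div_le_iff hrpos.ne' hrfin, ← mul_div_assoc, ENNReal.mul_comm_div, ← mul_div_assoc,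
      ENNReal.le_div_iff_mul_le (Or.inl hpos.ne') (Or.inl hfin)]
    exact h
  · have h := hmain n js hjs hpos B hB (n + 1) le_rfl (Icc 0 1) (by
      rintro _ ⟨x, hx, rfl⟩
      rw [Function.iterate_succ_apply']
      exact S.hT_maps (DL.ref_unit hb (hjs n le_rfl) (hcyl x hx)))
    rw [Real.volume_Icc, sub_zero, ENNReal.ofReal_one, mul_one] at h
    rw [← mul_div_assoc, ENNReal.le_div_iff_mul_le (Or.inl hpos.ne') (Or.inl hfin)]
    exact h
end

section
/- Let T satisfy (A1)–(A4) with refined partition P_o. For any sequence (j_n)_{n∈ℕ} of indices in ℤ⁻ ∪ {1,2,...}, the Lebesgue measure of the cylinders shrinks to zero: lim_{n→∞} Leb(I_{(j_0, ..., j_{n-1})}) = 0. -/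
open MeasureTheory Set Filter

lemma aux_expand_volume (f : ℝ → ℝ) (s A : Set ℝ) (q : NNReal)
    (hs : ∀ x ∈ s, ∀ y ∈ s, |x - y| ≤ q * |f x - f y|) :
    volume (s ∩ f ⁻¹' A) ≤ q * volume A := by
  classical
  have hinj : InjOn f s := by
    intro x hx y hy hxy
    have := hs x hx y hy
    rw [hxy, sub_self, abs_zero, mul_zero] at this
    exact sub_eq_zero.1 (abs_eq_zero.1 (le_antisymm this (abs_nonneg _)))
  have hL : LipschitzOnWith q (Function.invFunOn f s) (f '' (s ∩ f ⁻¹' A)) := by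
    apply LipschitzOnWith.of_dist_le_mul
    rintro _ ⟨x, hx, rfl⟩ _ ⟨y, hy, rfl⟩
    rw [hinj.leftInvOn_invFunOn hx.1, hinj.leftInvOn_invFunOn hy.1, Real.dist_eq, Real.dist_eq]
    exact hs x hx.1 y hy.1
  have h1 := hL.hausdorffMeasure_image_le (d := 1) zero_le_one
  have h2 : Function.invFunOn f s '' (f '' (s ∩ f ⁻¹' A)) = s ∩ f ⁻¹' A := by
    rw [image_image]
    ext x
    constructor
    · rintro ⟨y, hy, rfl⟩
      simpa only [hinj.leftInvOn_invFunOn hy.1] using hy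
    · intro hx
      exact ⟨x, hx, hinj.leftInvOn_invFunOn hx.1⟩
  rw [h2, hausdorffMeasure_real, ENNReal.rpow_one] at h1
  refine h1.trans ?_
  gcongr
  rintro _ ⟨x, hx, rfl⟩
  exact hx.2

lemma aux_mvt (S : IntervalMapSetup) (j : ℕ) {x y : ℝ} (hx : S.a j ≤ x) (hxy : x < y)
    (hy : y ≤ S.a (j+1)) : ∃ c, x < c ∧ c < y ∧ S.φ j y - S.φ j x = S.φd j c * (y - x) := by
  have hsub : Icc x y ⊆ Icc (S.a j) (S.a (j+1)) := Icc_subset_Icc hx hy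
  obtain ⟨c, hc, h⟩ := exists_hasDerivAt_eq_slope (S.φ j) (S.φd j) hxy
    (fun z hz => ((S.hφ_d j z (hsub hz)).continuousWithinAt).mono hsub)
    (fun z hz => (S.hφ_d j z (hsub (Ioo_subset_Icc_self hz))).hasDerivAt
      (Icc_mem_nhds (hx.trans_lt hz.1) (hz.2.trans_le hy)))
  refine ⟨c, hc.1, hc.2, ?_⟩
  rw [h]
  field_simp [(sub_pos.2 hxy).ne']

lemma aux_branch_expand (S : IntervalMapSetup) (j : ℕ) (q : NNReal)
    (hq : ∀ c ∈ Ioo (S.a j) (S.a (j+1)), 1 ≤ q * |S.φd j c|) :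
    ∀ x ∈ Ioo (S.a j) (S.a (j+1)), ∀ y ∈ Ioo (S.a j) (S.a (j+1)),
      |x - y| ≤ q * |S.T x - S.T y| := by
  have key : ∀ x ∈ Ioo (S.a j) (S.a (j+1)), ∀ y ∈ Ioo (S.a j) (S.a (j+1)), x < y →
      |y - x| ≤ q * |S.T y - S.T x| := by
    intro x hx y hy hxy
    obtain ⟨c, h1, h2, h⟩ := aux_mvt S j hx.1.le hxy hy.2.le
    rw [S.hT_eq j x hx, S.hT_eq j y hy, h, abs_mul, ← mul_assoc]
    exact le_mul_of_one_le_left (abs_nonneg _) (hq c ⟨hx.1.trans h1, h2.trans hy.2⟩)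
  intro x hx y hy
  rcases lt_trichotomy x y with h | h | h
  · rw [abs_sub_comm x, abs_sub_comm (S.T x)]
    exact key x hx y hy h
  · simp [h]
  · exact key y hy x hx h

lemma aux_branch_volume (S : IntervalMapSetup) (j : ℕ) (q : NNReal)
    (hq : ∀ c ∈ Ioo (S.a j) (S.a (j+1)), 1 ≤ q * |S.φd j c|) (A : Set ℝ) :
    volume (Icc (S.a j) (S.a (j+1)) ∩ S.T ⁻¹' A) ≤ q * volume A := by
  have h := aux_expand_volume S.T _ A q (aux_branch_expand S j q hq)
  refine le_trans (measure_mono_ae ?_) h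
  have := (Ioo_ae_eq_Icc (μ := volume) (a := S.a j) (b := S.a (j+1)))
  filter_upwards [this.mem_iff] with x hx hx2
  exact ⟨hx.2 hx2.1, hx2.2⟩

lemma aux_cyl_succ (S : IntervalMapSetup) (b : ℕ → ℝ) (n : ℕ) (js : ℕ → ℤ) :
    cylSet S b (n+1) js = refIo S b (js 0) ∩ S.T ⁻¹' cylSet S b n (fun k => js (k+1)) := by
  ext x
  simp only [cylSet, mem_iInter, Finset.mem_range, mem_preimage, mem_inter_iff]
  constructor
  · intro h
    exact ⟨h 0 (by omega), fun k hk => h (k+1) (by omega)⟩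
  · rintro ⟨h0, h⟩ k hk
    cases k with
    | zero => exact h0
    | succ k => exact h k (by omega)

lemma aux_cyl_anti (S : IntervalMapSetup) (b : ℕ → ℝ) (js : ℕ → ℤ) {m n : ℕ} (h : m ≤ n) : cylSet S b n js ⊆ cylSet S b m js := by
  intro x hx
  simp only [cylSet, mem_iInter, Finset.mem_range] at hx ⊢
  exact fun k hk => hx k (by omega)

lemma aux_refIo_neg (S : IntervalMapSetup) (b : ℕ → ℝ) (hb0 : b 0 = S.a 1)
    (hb_pos : ∀ k, 0 < b (k + 1)) (hb_lt : ∀ k, b (k + 1) < b k)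
    (j : ℤ) (hj : ¬ 1 ≤ j) : refIo S b j ⊆ Icc (S.a 0) (S.a 1) := by
  have hanti : StrictAnti b := strictAnti_nat_of_succ_lt hb_lt
  rw [refIo, if_neg hj, S.ha0]
  have h0 : ∀ k, 0 ≤ b k := fun k => (hb_pos k).le.trans (hb_lt k).le
  exact Icc_subset_Icc (h0 _) (hb0 ▸ hanti.antitone (Nat.zero_le _))

lemma aux_step (S : IntervalMapSetup) (b : ℕ → ℝ) (hb0 : b 0 = S.a 1)
    (hb_pos : ∀ k, 0 < b (k + 1)) (hb_lt : ∀ k, b (k + 1) < b k)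
    (j : ℤ) (A : Set ℝ) :
    volume (refIo S b j ∩ S.T ⁻¹' A) ≤
      ENNReal.ofReal S.Λ⁻¹ ^ (if 1 ≤ j then 1 else 0) * volume A := by
  have hΛ := S.hΛ
  split_ifs with hj
  · have h := aux_branch_volume S j.toNat (Real.toNNReal S.Λ⁻¹) (fun c hc => by
      rw [Real.coe_toNNReal _ (by positivity)]
      have := S.hA2 j.toNat (by omega) c (Ioo_subset_Icc_self hc)
      rw [inv_mul_eq_div, le_div_iff₀ (by positivity)]
      linarith) A
    rw [refIo, if_pos hj, pow_one]
    exact h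
  · have h := aux_branch_volume S 0 1 (fun c hc => by
      rw [S.ha0] at hc
      have := S.hA4_exp c hc.1 hc.2.le
      rw [NNReal.coe_one, one_mul]
      exact this.le.trans (le_abs_self _)) A
    rw [pow_zero]
    refine le_trans (measure_mono ?_) h
    exact inter_subset_inter_left _ (aux_refIo_neg S b hb0 hb_pos hb_lt j hj)

lemma aux_refIo_volume (S : IntervalMapSetup) (b : ℕ → ℝ) (hb0 : b 0 = S.a 1)
    (hb_pos : ∀ k, 0 < b (k + 1)) (hb_lt : ∀ k, b (k + 1) < b k)
    (j : ℤ) : volume (refIo S b j) ≤ 1 := by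
  have : refIo S b j ⊆ Icc 0 1 := by
    by_cases hj : 1 ≤ j
    · rw [refIo, if_pos hj]
      refine Icc_subset_Icc ?_ (S.ha_lt _).le
      rw [← S.ha0]
      exact S.ha_mono.monotone (Nat.zero_le _)
    · refine (aux_refIo_neg S b hb0 hb_pos hb_lt j hj).trans ?_
      rw [S.ha0]
      exact Icc_subset_Icc le_rfl (S.ha_lt _).le
  calc _ ≤ volume (Icc (0:ℝ) 1) := measure_mono this
    _ = 1 := by simp

lemma aux_count (S : IntervalMapSetup) (b : ℕ → ℝ) (hb0 : b 0 = S.a 1)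
    (hb_pos : ∀ k, 0 < b (k + 1)) (hb_lt : ∀ k, b (k + 1) < b k)
    (n : ℕ) : ∀ js : ℕ → ℤ, volume (cylSet S b (n+1) js) ≤
    ENNReal.ofReal S.Λ⁻¹ ^ (Nat.count (fun k => 1 ≤ js k) n) := by
  induction n with
  | zero =>
    intro js
    rw [Nat.count_zero, pow_zero, aux_cyl_succ]
    exact (measure_mono inter_subset_left).trans (aux_refIo_volume S b hb0 hb_pos hb_lt _)
  | succ n ih =>
    intro js
    rw [aux_cyl_succ, Nat.count_succ', pow_add, mul_comm]
    refine (aux_step S b hb0 hb_pos hb_lt _ _).trans ?_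
    gcongr
    exact ih _

lemma aux_neg (S : IntervalMapSetup) (b : ℕ → ℝ) (hb0 : b 0 = S.a 1)
    (hb_pos : ∀ k, 0 < b (k + 1)) (hb_lt : ∀ k, b (k + 1) < b k)
    (hb_T : ∀ k, S.T (b (k + 1)) = b k) (k : ℕ) : ∀ js : ℕ → ℤ, (∀ n, js n < 0) →
    (-js 0).toNat ≤ k → volume (cylSet S b (k+1) js) = 0 := by
  have hanti : StrictAnti b := strictAnti_nat_of_succ_lt hb_lt
  induction k with
  | zero =>
    intro js h h0
    have := h 0
    omega
  | succ k ih =>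
    intro js h h0
    by_cases h1 : (-js 1).toNat ≤ k
    · have hz := ih (fun k => js (k+1)) (fun n => h _) h1
      rw [aux_cyl_succ]
      refine le_antisymm ((aux_step S b hb0 hb_pos hb_lt _ _).trans ?_) (zero_le)
      rw [hz, mul_zero]
    · obtain ⟨l, hl⟩ : ∃ l, (-js 0).toNat = l + 1 := ⟨(-js 0).toNat - 1, by have := h 0; omega⟩
      have hsub : cylSet S b (k+1+1) js ⊆ {b (l+1), b l} := by
        intro x hx
        rw [aux_cyl_succ, aux_cyl_succ] at hx
        obtain ⟨hx0, hx1, -⟩ := hx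
        have e0 := h 0
        have e1 := h 1
        rw [refIo, if_neg (by omega), hl, Nat.add_sub_cancel] at hx0
        simp only [zero_add] at hx1
        rw [refIo, if_neg (by omega)] at hx1
        by_contra hne
        simp only [mem_insert_iff, mem_singleton_iff, not_or] at hne
        have g1 : b (l+1) < x := lt_of_le_of_ne hx0.1 (Ne.symm hne.1)
        have g2 : x < b l := lt_of_le_of_ne hx0.2 hne.2
        have g3 : b l ≤ S.a 1 := hb0 ▸ hanti.antitone (Nat.zero_le _)
        have g4 := hb_pos l
        obtain ⟨c, c1, c2, hc⟩ := aux_mvt S 0 (x := b (l+1)) (y := x)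
          (by rw [S.ha0]; exact g4.le) g1 (g2.le.trans g3)
        have hd := S.hA4_exp c (g4.trans c1) (by linarith)
        rw [← S.hT_eq 0 x ⟨by rw [S.ha0]; linarith, g2.trans_le g3⟩,
          ← S.hT_eq 0 (b (l+1)) ⟨by rw [S.ha0]; linarith, (hb_lt l).trans_le g3⟩, hb_T] at hc
        have hp : 0 < S.φd 0 c * (x - b (l+1)) := mul_pos (by linarith) (by linarith)
        have g5 : S.T x ≤ b ((-js 1).toNat - 1) := hx1.2
        have g6 : b ((-js 1).toNat - 1) ≤ b l := hanti.antitone (by omega)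
        linarith
      exact measure_mono_null hsub ((Set.toFinite _).measure_zero _)

lemma aux_shift (S : IntervalMapSetup) (b : ℕ → ℝ) (hb0 : b 0 = S.a 1)
    (hb_pos : ∀ k, 0 < b (k + 1)) (hb_lt : ∀ k, b (k + 1) < b k)
    (N n : ℕ) : ∀ js : ℕ → ℤ,
    volume (cylSet S b (n+N) js) ≤ volume (cylSet S b n (fun k => js (k+N))) := by
  induction N with
  | zero => intro js; exact le_rfl
  | succ N ih =>
    intro js
    rw [← add_assoc, aux_cyl_succ]
    refine (aux_step S b hb0 hb_pos hb_lt _ _).trans ?_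
    refine (mul_le_of_le_one_left (zero_le) ?_).trans (ih _)
    apply pow_le_one₀ (zero_le)
    rw [ENNReal.ofReal_le_one]
    exact inv_le_one_of_one_le₀ S.hΛ.le

/-- for any sequence of nonzero indices, the Lebesgue measure of the
cylinders `I_{(j_0, …, j_{n-1})}` tends to zero. -/
theorem cylinders_shrink (S : IntervalMapSetup) (b : ℕ → ℝ) (hb0 : b 0 = S.a 1)
    (hb_pos : ∀ k, 0 < b (k + 1)) (hb_lt : ∀ k, b (k + 1) < b k)
    (hb_T : ∀ k, S.T (b (k + 1)) = b k) :
    ∀ js : ℕ → ℤ, (∀ n, js n ≠ 0) →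
      Tendsto (fun n => volume (cylSet S b n js)) atTop (nhds 0) := by
  intro js hjs
  by_cases hinf : {k | 1 ≤ js k}.Infinite
  · rw [← tendsto_add_atTop_iff_nat 1]
    have hq : ENNReal.ofReal S.Λ⁻¹ < 1 := by
      rw [ENNReal.ofReal_lt_one]
      exact inv_lt_one_of_one_lt₀ S.hΛ
    have hc : Tendsto (Nat.count (fun k => 1 ≤ js k)) atTop atTop :=
      tendsto_atTop_atTop_of_monotone (Nat.count_monotone _)
        (fun m => ⟨Nat.nth (fun k => 1 ≤ js k) m, (Nat.count_nth_of_infinite hinf m).ge⟩)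
    exact tendsto_of_tendsto_of_tendsto_of_le_of_le tendsto_const_nhds
      ((ENNReal.tendsto_pow_atTop_nhds_zero_of_lt_one hq).comp hc) (fun _ => zero_le)
      (fun n => aux_count S b hb0 hb_pos hb_lt n js)
  · obtain ⟨M, hM⟩ := (not_infinite.1 hinf).bddAbove
    have hneg : ∀ n, js (n + (M+1)) < 0 := by
      intro n
      by_contra hcon
      have h1 := hjs (n + (M+1))
      have h2 : n + (M+1) ≤ M := hM (show 1 ≤ js (n + (M+1)) by omega)
      omega
    set k := (-js (0 + (M+1))).toNat with hk
    have hz := aux_neg S b hb0 hb_pos hb_lt hb_T k (fun n => js (n + (M+1))) hneg le_rfl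
    apply tendsto_const_nhds.congr'
    filter_upwards [eventually_ge_atTop (k + 1 + (M+1))] with n hn
    refine (le_antisymm ?_ (zero_le)).symm
    calc _ ≤ volume (cylSet S b (k + 1 + (M+1)) js) := measure_mono (aux_cyl_anti S b js hn)
      _ ≤ _ := aux_shift S b hb0 hb_pos hb_lt _ _ js
      _ = 0 := hz
end

section
/- Let T satisfy (A1)–(A4) and let D > 1 be the distortion constant of the Distortion Lemma. For every index ȷ ≥ 1 there exists δ ∈ (0,1), namely δ = D/(D + Leb(I_ȷ)), such that every Borel set C ⊆ I_ȷ with Leb(C)/Leb(I_ȷ) > δ satisfies Leb(C ∩ TC) > 0, where TC is the forward image of C under T. -/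
open MeasureTheory Set Filter

/-- given the distortion constant `D > 1` (with
`Leb(T B) ≤ D · Leb(B)/Leb(I_ȷ)` for Borel `B ⊆ I_ȷ`, `ȷ ≥ 1`), for every `ȷ ≥ 1` the
number `δ = D/(D + Leb(I_ȷ))` lies in `(0,1)` and every Borel `C ⊆ I_ȷ` with
`Leb(C)/Leb(I_ȷ) > δ` satisfies `Leb(C ∩ T C) > 0`. -/
theorem overlap_of_large_density (S : IntervalMapSetup) (D : ℝ) (hD : 1 < D)
    (hDist : ∀ j : ℕ, 1 ≤ j → ∀ B : Set ℝ, B ⊆ Set.Icc (S.a j) (S.a (j + 1)) →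
      MeasurableSet B →
      volume (S.T '' B) ≤
        ENNReal.ofReal D * (volume B / volume (Set.Icc (S.a j) (S.a (j + 1))))) :
    ∀ j : ℕ, 1 ≤ j →
      0 < D / (D + (S.a (j + 1) - S.a j)) ∧ D / (D + (S.a (j + 1) - S.a j)) < 1 ∧
      ∀ C : Set ℝ, C ⊆ Set.Icc (S.a j) (S.a (j + 1)) → MeasurableSet C →
        ENNReal.ofReal (D / (D + (S.a (j + 1) - S.a j))) <
          volume C / volume (Set.Icc (S.a j) (S.a (j + 1))) →
        0 < volume (C ∩ S.T '' C) := by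
  intro j hj
  have hL : 0 < S.a (j + 1) - S.a j := sub_pos.2 (S.ha_mono (Nat.lt_succ_self j))
  have hL0 : 0 ≤ S.a j := by
    have := S.ha_mono.monotone (Nat.zero_le j)
    rwa [S.ha0] at this
  have hL1 : S.a (j + 1) < 1 := S.ha_lt _
  have hD0 : 0 < D := by linarith
  refine ⟨by positivity, by rw [div_lt_one (by positivity)]; linarith, ?_⟩
  intro C hC hCm hlt
  rw [pos_iff_ne_zero]
  intro h0
  have hdist := hDist j hj (Set.Icc (S.a j) (S.a (j + 1)) \ C) diff_subset
    (measurableSet_Icc.diff hCm)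
  have hsub : C ⊆ ((C ∩ S.T '' C) ∪ S.T '' (Set.Icc (S.a j) (S.a (j + 1)) \ C)) ∪
      {S.φ j (S.a j), S.φ j (S.a (j + 1))} := by
    intro x hx
    have hxI := hC hx
    obtain ⟨y, hy, hyx⟩ := (S.hφ_bij j).surjOn
      (show x ∈ Icc (0:ℝ) 1 from ⟨hL0.trans hxI.1, hxI.2.trans hL1.le⟩)
    by_cases h1 : y = S.a j
    · right; left; rw [← hyx, h1]
    by_cases h2 : y = S.a (j + 1)
    · right; right; rw [← hyx, h2]; rfl
    left
    have hT : S.T y = x := by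
      rw [S.hT_eq j y ⟨lt_of_le_of_ne hy.1 (Ne.symm h1), lt_of_le_of_ne hy.2 h2⟩, hyx]
    by_cases hyC : y ∈ C
    · exact Or.inl ⟨hx, y, hyC, hT⟩
    · exact Or.inr ⟨y, ⟨hy, hyC⟩, hT⟩
  have hfin : volume ({S.φ j (S.a j), S.φ j (S.a (j + 1))} : Set ℝ) = 0 :=
    (Set.toFinite _).measure_zero _
  have hvol : volume C ≤ volume (S.T '' (Set.Icc (S.a j) (S.a (j + 1)) \ C)) := by
    calc volume C ≤ _ := measure_mono hsub
      _ ≤ _ := measure_union_le _ _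
      _ ≤ _ := add_le_add_left (measure_union_le _ _) _
      _ = _ := by rw [h0, hfin, zero_add, add_zero]
  have hCtop : volume C ≠ ⊤ :=
    ((measure_mono hC).trans_lt (by rw [Real.volume_Icc]; exact ENNReal.ofReal_lt_top)).ne
  rw [measure_diff hC hCm.nullMeasurableSet hCtop, Real.volume_Icc] at hdist
  rw [Real.volume_Icc] at hlt
  have hle := hvol.trans hdist
  have hCL : volume C ≤ ENNReal.ofReal (S.a (j + 1) - S.a j) := by
    rw [← Real.volume_Icc]; exact measure_mono hC
  set L := S.a (j + 1) - S.a j with hLdef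
  obtain ⟨c, hc0, hc⟩ : ∃ c : ℝ, 0 ≤ c ∧ volume C = ENNReal.ofReal c :=
    ⟨(volume C).toReal, ENNReal.toReal_nonneg, (ENNReal.ofReal_toReal hCtop).symm⟩
  rw [hc] at hle hlt hCL
  rw [ENNReal.ofReal_le_ofReal_iff hL.le] at hCL
  rw [← ENNReal.ofReal_div_of_pos hL] at hlt
  rw [← ENNReal.ofReal_sub _ hc0, ← ENNReal.ofReal_div_of_pos hL,
    ← ENNReal.ofReal_mul hD0.le, ENNReal.ofReal_le_ofReal_iff
      (mul_nonneg hD0.le (div_nonneg (by linarith) hL.le))] at hle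
  have hlt' := (ENNReal.ofReal_lt_ofReal_iff_of_nonneg (by positivity)).1 hlt
  rw [div_lt_div_iff₀ (by positivity) hL] at hlt'
  rw [← mul_div_assoc, le_div_iff₀ hL] at hle
  nlinarith
end

section
/- Let T satisfy (A1)–(A4), let (b_k) be the backward orbit of a_1 in I_0 (b_0 = a_1, T(b_{k+1}) = b_k, b_{k+1} < b_k), and set α := 1/(β+1). Then there exist constants 0 < κ₁ < κ₂ such that for all k ≥ 1: κ₁ k^{-α} ≤ b_k ≤ κ₂ k^{-α}, and κ₁ b_k^{β+2} ≤ b_{k-1} - b_k ≤ κ₂ b_k^{β+2} (so in particular b_{k-1} - b_k is comparable to k^{-(α+1)}). -/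
open MeasureTheory Set Filter

/-- Second-order integration of a lower bound for the second derivative. -/
theorem aux_lower {A β c : ℝ} (hA : 0 < A) (hβ : 0 ≤ β) {f f' f'' : ℝ → ℝ}
    (hf : ∀ x ∈ Icc 0 A, HasDerivWithinAt f (f' x) (Icc 0 A) x)
    (hf' : ∀ x ∈ Icc 0 A, HasDerivWithinAt f' (f'' x) (Icc 0 A) x)
    (h0 : f 0 = 0) (h1 : f' 0 = 0)
    (hb : ∀ x ∈ Ioo 0 A, c * x ^ β ≤ f'' x) :
    ∀ x ∈ Icc 0 A, c / ((β + 1) * (β + 2)) * x ^ (β + 2) ≤ f x := by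
  have p1 : 0 < β + 1 := by linarith
  have p2 : 0 < β + 2 := by linarith
  have key : ∀ (g g' : ℝ → ℝ), (∀ x ∈ Icc 0 A, HasDerivWithinAt g (g' x) (Icc 0 A) x) →
      g 0 = 0 → (∀ x ∈ Ioo 0 A, 0 ≤ g' x) → ∀ x ∈ Icc 0 A, 0 ≤ g x := by
    intro g g' hg hg0 hpos x hx
    have hm : MonotoneOn g (Icc 0 A) := by
      apply monotoneOn_of_hasDerivWithinAt_nonneg (f' := g') (convex_Icc 0 A)
        (fun x hx => (hg x hx).continuousWithinAt)
      · intro x hx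
        exact (hg x (interior_subset hx)).mono interior_subset
      · intro x hx
        rw [interior_Icc] at hx
        exact hpos x hx
    have := hm (left_mem_Icc.2 hA.le) hx hx.1
    linarith
  have dpow : ∀ q : ℝ, 1 ≤ q → ∀ x : ℝ, HasDerivWithinAt (fun x : ℝ => x ^ q) (q * x ^ (q - 1))
      (Icc 0 A) x := fun q hq x => (Real.hasDerivAt_rpow_const (Or.inr hq)).hasDerivWithinAt
  have s1 : ∀ x ∈ Icc 0 A, 0 ≤ f' x - c / (β + 1) * x ^ (β + 1) := by
    apply key _ (fun x => f'' x - c / (β + 1) * ((β + 1) * x ^ (β + 1 - 1)))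
    · intro x hx
      exact (hf' x hx).sub ((dpow (β + 1) (by linarith) x).const_mul _)
    · simp [h1, Real.zero_rpow p1.ne']
    · intro x hx
      have := hb x hx
      have e : c / (β + 1) * ((β + 1) * x ^ (β + 1 - 1)) = c * x ^ β := by
        rw [add_sub_cancel_right]; field_simp
      rw [e]; linarith
  have s2 : ∀ x ∈ Icc 0 A, 0 ≤ f x - c / ((β + 1) * (β + 2)) * x ^ (β + 2) := by
    apply key _ (fun x => f' x - c / ((β + 1) * (β + 2)) * ((β + 2) * x ^ (β + 2 - 1)))
    · intro x hx
      exact (hf x hx).sub ((dpow (β + 2) (by linarith) x).const_mul _)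
    · simp [h0, Real.zero_rpow p2.ne']
    · intro x hx
      have := s1 x (Ioo_subset_Icc_self hx)
      have e : c / ((β + 1) * (β + 2)) * ((β + 2) * x ^ (β + 2 - 1))
          = c / (β + 1) * x ^ (β + 1) := by
        rw [show β + 2 - 1 = β + 1 by ring]; field_simp
      rw [e]; exact this
  intro x hx
  linarith [s2 x hx]

/-- One step of the recursion in the coordinate `x ↦ x ^ (-p)`. -/
theorem aux_step_s15 {p d₁ d₂ x y : ℝ} (hp : 1 ≤ p) (hd₁ : 0 < d₁) (hd₂ : 0 < d₂) (hx : 0 < x)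
    (hx1 : x ≤ 1) (hxy : x < y) (hl : d₁ * x ^ (p + 1) ≤ y - x)
    (hu : y - x ≤ d₂ * x ^ (p + 1)) :
    d₁ / (1 + d₂) ≤ x ^ (-p) - y ^ (-p) ∧ x ^ (-p) - y ^ (-p) ≤ p * d₂ := by
  have hy : 0 < y := hx.trans hxy
  have hxp : 0 < x ^ p := Real.rpow_pos_of_pos hx p
  have hyp : 0 < y ^ p := Real.rpow_pos_of_pos hy p
  have hxp1 : x ^ p ≤ 1 := Real.rpow_le_one hx.le hx1 (by linarith)
  have e1 : x ^ (p + 1) = x ^ p * x := by rw [Real.rpow_add hx, Real.rpow_one]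
  rw [e1] at hl hu
  have ht0 : 0 < x / y := by positivity
  have ht1 : x / y ≤ 1 := (div_le_one hy).2 hxy.le
  have hid : x ^ (-p) - y ^ (-p) = (1 - (x / y) ^ p) / x ^ p := by
    rw [Real.rpow_neg hx.le, Real.rpow_neg hy.le, Real.div_rpow hx.le hy.le]
    field_simp
  have hB : 1 + p * (x / y - 1) ≤ (x / y) ^ p := by
    have := one_add_mul_self_le_rpow_one_add (s := x / y - 1) (by linarith) hp
    simpa using this
  have hC : (x / y) ^ p ≤ x / y := by
    have := Real.rpow_le_rpow_of_exponent_ge ht0 ht1 hp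
    simpa using this
  have h1y : 1 - x / y = (y - x) / y := by field_simp
  rw [hid]
  constructor
  · rw [le_div_iff₀ hxp]
    have : d₁ / (1 + d₂) * x ^ p ≤ (y - x) / y := by
      rw [le_div_iff₀ hy, div_mul_eq_mul_div, div_mul_eq_mul_div, div_le_iff₀ (by positivity)]
      have hy2 : y ≤ (1 + d₂) * x := by
        have : d₂ * (x ^ p * x) ≤ d₂ * (1 * x) := by gcongr
        linarith
      calc d₁ * x ^ p * y ≤ d₁ * x ^ p * ((1 + d₂) * x) := by gcongr
        _ = d₁ * (x ^ p * x) * (1 + d₂) := by ring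
        _ ≤ (y - x) * (1 + d₂) := by gcongr
    linarith
  · rw [div_le_iff₀ hxp]
    have : (y - x) / y ≤ d₂ * x ^ p := by
      rw [div_le_iff₀ hy]
      have : d₂ * (x ^ p * x) ≤ d₂ * (x ^ p * y) := by gcongr
      linarith
    have h3 : p * ((y - x) / y) ≤ p * (d₂ * x ^ p) := by gcongr
    have h4 : p * (x / y - 1) = - (p * ((y - x) / y)) := by rw [← h1y]; ring
    linarith

/-- with `α = 1/(β+1)`, there are `0 < κ₁ < κ₂` with
`κ₁ k^{-α} ≤ b_k ≤ κ₂ k^{-α}` and `κ₁ b_k^{β+2} ≤ b_{k-1} - b_k ≤ κ₂ b_k^{β+2}`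
for all `k ≥ 1`. -/
theorem b_asymptotics (S : IntervalMapSetup) (b : ℕ → ℝ) (hb0 : b 0 = S.a 1)
    (hb_pos : ∀ k, 0 < b (k + 1)) (hb_lt : ∀ k, b (k + 1) < b k)
    (hb_T : ∀ k, S.T (b (k + 1)) = b k) :
    ∃ κ₁ κ₂ : ℝ, 0 < κ₁ ∧ κ₁ < κ₂ ∧
      ∀ k : ℕ, 1 ≤ k →
        (κ₁ * (k : ℝ) ^ (-(1 / (S.β + 1))) ≤ b k ∧
          b k ≤ κ₂ * (k : ℝ) ^ (-(1 / (S.β + 1)))) ∧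
        (κ₁ * b k ^ (S.β + 2) ≤ b (k - 1) - b k ∧
          b (k - 1) - b k ≤ κ₂ * b k ^ (S.β + 2)) := by
  set p := S.β + 1 with hpdef
  have hβ := S.hβ
  have hp : 1 ≤ p := by linarith
  have hp0 : 0 < p := by linarith
  have hA : 0 < S.a 1 := by
    have := S.ha_mono (show 0 < 1 by norm_num)
    rwa [S.ha0] at this
  have hA1 : S.a 1 < 1 := S.ha_lt 1
  have hc1 := S.hc₁
  have hc2 : 0 < S.c₂ := S.hc₁.trans S.hc₁₂
  have hf := S.hφ_d 0
  have hf' := S.hφ_dd 0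
  simp only [S.ha0, zero_add] at hf hf'
  set d₁ := S.c₁ / ((S.β + 1) * (S.β + 2)) with hd1
  set d₂ := S.c₂ / ((S.β + 1) * (S.β + 2)) with hd2
  have hd₁ : 0 < d₁ := by positivity
  have hd₂ : 0 < d₂ := by positivity
  have hd₁₂ : d₁ < d₂ := by
    have := S.hc₁₂
    rw [hd1, hd2]; gcongr
  have L := aux_lower (c := S.c₁) hA hβ (f := fun x => S.φ 0 x - x) (f' := fun x => S.φd 0 x - 1)
    (f'' := S.φdd 0) (fun x hx => (hf x hx).sub (hasDerivWithinAt_id x _))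
    (fun x hx => (hf' x hx).sub_const 1) (by simp [S.hA4_fix]) (by simp [S.hA4_d1])
    (fun x hx => (S.hA4_dd x hx).1)
  have U := aux_lower (c := -S.c₂) hA hβ (f := fun x => x - S.φ 0 x) (f' := fun x => 1 - S.φd 0 x)
    (f'' := fun x => - S.φdd 0 x) (fun x hx => (hasDerivWithinAt_id x _).sub (hf x hx))
    (fun x hx => (hf' x hx).const_sub 1) (by simp [S.hA4_fix]) (by simp [S.hA4_d1])
    (fun x hx => by have := (S.hA4_dd x hx).2; linarith)
  have hanti : StrictAnti b := strictAnti_nat_of_succ_lt hb_lt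
  have hpos : ∀ k, 0 < b k := fun k => (hb_pos k).trans (hb_lt k)
  have hlt : ∀ k, b (k + 1) < S.a 1 := fun k => by
    rw [← hb0]; exact hanti (Nat.succ_pos k)
  have hdiff : ∀ k, d₁ * b (k + 1) ^ (S.β + 2) ≤ b k - b (k + 1) ∧
      b k - b (k + 1) ≤ d₂ * b (k + 1) ^ (S.β + 2) := by
    intro k
    have hφ : S.φ 0 (b (k + 1)) = b k := by
      rw [← hb_T k]
      exact (S.hT_eq 0 _ ⟨by rw [S.ha0]; exact hpos _, hlt k⟩).symm
    have hm : b (k + 1) ∈ Icc 0 (S.a 1) := ⟨(hpos _).le, (hlt k).le⟩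
    have l := L _ hm
    have u := U _ hm
    simp only [hφ] at l u
    refine ⟨l, ?_⟩
    have e : -S.c₂ / ((S.β + 1) * (S.β + 2)) = - d₂ := by rw [hd2]; ring
    rw [e] at u
    linarith
  set m := d₁ / (1 + d₂) with hm
  have hm0 : 0 < m := by positivity
  have hstep : ∀ k, m ≤ b (k + 1) ^ (-p) - b k ^ (-p) ∧
      b (k + 1) ^ (-p) - b k ^ (-p) ≤ p * d₂ := by
    intro k
    have e : p + 1 = S.β + 2 := by rw [hpdef]; ring
    exact aux_step_s15 hp hd₁ hd₂ (hpos _) ((hlt k).le.trans hA1.le) (hb_lt k)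
      (by rw [e]; exact (hdiff k).1) (by rw [e]; exact (hdiff k).2)
  have hu0 : 0 < b 0 ^ (-p) := Real.rpow_pos_of_pos (hpos 0) _
  have hlow : ∀ k : ℕ, m * k ≤ b k ^ (-p) := by
    intro k
    induction k with
    | zero => simpa using hu0.le
    | succ k ih => push_cast; linarith [(hstep k).1]
  have hup : ∀ k : ℕ, b k ^ (-p) ≤ b 0 ^ (-p) + p * d₂ * k := by
    intro k
    induction k with
    | zero => simp
    | succ k ih => push_cast; linarith [(hstep k).2]
  set M := b 0 ^ (-p) + p * d₂ with hM
  have hM0 : 0 < M := by positivity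
  have hback : ∀ k, (b k ^ (-p)) ^ (-(1 / p)) = b k := by
    intro k
    rw [← Real.rpow_mul (hpos k).le]
    rw [show -p * -(1 / p) = 1 by field_simp, Real.rpow_one]
  have hneg : -(1 / p) ≤ 0 := by
    have : 0 < 1 / p := by positivity
    linarith
  refine ⟨min d₁ (M ^ (-(1 / p))), max d₂ (m ^ (-(1 / p))), ?_, ?_, ?_⟩
  · exact lt_min hd₁ (Real.rpow_pos_of_pos hM0 _)
  · exact (min_le_left _ _).trans_lt (hd₁₂.trans_le (le_max_left _ _))
  · intro k hk
    have hk1 : (1 : ℝ) ≤ k := by exact_mod_cast hk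
    have hk0 : (0 : ℝ) < k := by linarith
    have hkp : 0 < (k : ℝ) ^ (-(1 / p)) := Real.rpow_pos_of_pos hk0 _
    have hbp : 0 < b k ^ (-p) := Real.rpow_pos_of_pos (hpos k) _
    refine ⟨⟨?_, ?_⟩, ?_⟩
    · have h1 : b k ^ (-p) ≤ M * k := by
        have := hup k
        have h2 : b 0 ^ (-p) * 1 ≤ b 0 ^ (-p) * k := by gcongr
        rw [hM, add_mul]; linarith
      have h3 := Real.rpow_le_rpow_of_nonpos hbp h1 hneg
      rw [hback, Real.mul_rpow hM0.le hk0.le] at h3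
      refine le_trans ?_ h3
      gcongr
      exact min_le_right _ _
    · have h3 := Real.rpow_le_rpow_of_nonpos (by positivity) (hlow k) hneg
      rw [hback, Real.mul_rpow hm0.le hk0.le] at h3
      refine h3.trans ?_
      gcongr
      exact le_max_right _ _
    · obtain ⟨j, rfl⟩ : ∃ j, k = j + 1 := ⟨k - 1, by omega⟩
      have hq : 0 < b (j + 1) ^ (S.β + 2) := Real.rpow_pos_of_pos (hpos _) _
      rw [Nat.add_sub_cancel]
      constructor
      · refine le_trans ?_ (hdiff j).1
        gcongr
        exact min_le_left _ _
      · refine (hdiff j).2.trans ?_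
        gcongr
        exact le_max_left _ _
end
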